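/- arXiv:1002.2594 — 2 statements merged into one kernel-verified Lean document; each statement's English description precedes it below -/
import Mathlib

section
/- Let Ω be an algebraic closure of F_2 and let d ≥ 1 be odd. Fix x_0 ∈ Ω such that U_0 = F_2(x_0) has degree d over F_2 and Tr_{U_0/F_2}(x_0) ≠ 0. Let x_1, x_2, … ∈ Ω satisfy x_1^2 + x_1 = x_0, x_2^2 + x_2 = x_1, and x_i^2 + x_i = x_{i−1}^3 for all i ≥ 3. Then for every i ≥ 0 the element x_i generates F_2(x_0, …, x_i) over F_2, and [F_2(x_i) : F_2] = 2^i · d. -/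
open IntermediateField

section FiniteBase

variable {K L : Type*} [Field K] [Fintype K] [Field L] [Algebra K L]

/-- An element is fixed by the `m`-th power of Frobenius iff its degree divides `m`. -/
theorem pow_card_pow_eq_self_iff_finrank_adjoin_dvd {a : L} (ha : IsIntegral K a) (m : ℕ) :
    a ^ Fintype.card K ^ m = a ↔ Module.finrank K K⟮a⟯ ∣ m := by
  have : FiniteDimensional K K⟮a⟯ := adjoin.finiteDimensional ha
  have : Finite K⟮a⟯ := Module.finite_of_finite K
  rw [← FiniteField.orderOf_frobeniusAlgHom K K⟮a⟯, orderOf_dvd_iff_pow_eq_one]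
  have apply_pow (y : K⟮a⟯) : (FiniteField.frobeniusAlgHom K K⟮a⟯ ^ m) y =
      y ^ Fintype.card K ^ m := by
    rw [AlgHom.coe_pow, FiniteField.coe_frobeniusAlgHom, pow_iterate]
  constructor
  · intro h
    refine (adjoin.powerBasis ha).algHom_ext ?_
    rw [adjoin.powerBasis_gen, apply_pow, AlgHom.one_apply]
    exact Subtype.ext (by simpa using h)
  · intro h
    have := apply_pow (AdjoinSimple.gen K a)
    rw [h, AlgHom.one_apply] at this
    simpa using (congrArg Subtype.val this).symm

/-- A finite subextension contains every element fixed by the corresponding power of Frobenius. -/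
theorem IntermediateField.mem_of_pow_card_pow_finrank_eq_self (E : IntermediateField K L)
    [FiniteDimensional K E] {y : L}
    (hy : y ^ Fintype.card K ^ Module.finrank K E = y) : y ∈ E := by
  have : Finite E := Module.finite_of_finite K
  have := Fintype.ofFinite E
  rw [← Module.card_eq_pow_finrank (K := K) (V := E)] at hy
  have hne : (Polynomial.X ^ Fintype.card E - Polynomial.X : Polynomial L) ≠ 0 :=
    FiniteField.X_pow_card_sub_X_ne_zero L Fintype.one_lt_card
  have hroots := Polynomial.roots_map_of_injective_of_card_eq_natDegree
    (p := (Polynomial.X ^ Fintype.card E - Polynomial.X : Polynomial E))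
    (algebraMap E L).injective (by
      rw [FiniteField.roots_X_pow_card_sub_X,
        FiniteField.X_pow_card_sub_X_natDegree_eq E Fintype.one_lt_card]
      rfl)
  have hmem : y ∈ (Polynomial.X ^ Fintype.card E - Polynomial.X : Polynomial L).roots := by
    simp [Polynomial.mem_roots hne, hy]
  rw [Polynomial.map_sub, Polynomial.map_pow, Polynomial.map_X,
    FiniteField.roots_X_pow_card_sub_X] at hroots
  rw [← hroots] at hmem
  obtain ⟨z, -, rfl⟩ := Multiset.mem_map.mp hmem
  exact z.2

end FiniteBase

theorem pow_two_pow_even_eq_self_of_cube_eq_one {M : Type*} [Monoid M] {w : M}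
    (hw : w ^ 3 = 1) {n : ℕ} (hn : Even n) :
    w ^ 2 ^ n = w := by
  obtain ⟨k, rfl⟩ := hn
  rw [← two_mul]
  induction k with
  | zero => simp
  | succ k ih =>
    rw [mul_add, pow_add, pow_mul, ih]
    norm_num [pow_succ _ 3, hw]

section CharTwo

variable {R : Type*} [CommRing R] [CharP R 2]

theorem sum_sq_add_self_pow_two_pow (y : R) (n : ℕ) :
    ∑ j ∈ Finset.range n, (y ^ 2 + y) ^ 2 ^ j = y ^ 2 ^ n + y := by
  induction n with
  | zero => simp [CharTwo.add_self_eq_zero]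
  | succ n ih =>
    rw [Finset.sum_range_succ, ih, add_pow_char_pow, ← pow_mul, ← pow_succ']
    linear_combination CharTwo.add_self_eq_zero (y ^ 2 ^ n)

theorem sum_range_two_mul_pow_two_pow (a : R) (n : ℕ) :
    ∑ j ∈ Finset.range (2 * n), a ^ 2 ^ j = ∑ j ∈ Finset.range n, (a + a ^ 2 ^ n) ^ 2 ^ j := by
  simp_rw [two_mul, Finset.sum_range_add, add_pow_char_pow, Finset.sum_add_distrib, ← pow_mul,
    ← pow_add]

theorem sum_add_one_pow_two_pow (a : R) (n : ℕ) :
    ∑ j ∈ Finset.range n, (a + 1) ^ 2 ^ j = ∑ j ∈ Finset.range n, a ^ 2 ^ j + n := by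
  simp [add_pow_char_pow, Finset.sum_add_distrib]

theorem pow_two_pow_eq_add_one {y a : R} {n : ℕ} (hy : y ^ 2 + y = a)
    (ha : ∑ j ∈ Finset.range n, a ^ 2 ^ j = 1) : y ^ 2 ^ n = y + 1 := by
  rw [← hy, sum_sq_add_self_pow_two_pow] at ha
  linear_combination ha - CharTwo.add_self_eq_zero y

theorem pow_two_pow_two_mul_eq_self {y : R} {n : ℕ} (hy : y ^ 2 ^ n = y + 1) :
    y ^ 2 ^ (2 * n) = y := by
  rw [two_mul, pow_add, pow_mul, hy, add_pow_char_pow, hy, one_pow]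
  linear_combination CharTwo.add_self_eq_zero (1 : R)

theorem sum_range_two_mul_cube_pow_two_pow {y : R} {n : ℕ} (hy : y ^ 2 ^ n = y + 1) :
    ∑ j ∈ Finset.range (2 * n), (y ^ 3) ^ 2 ^ j =
      ∑ j ∈ Finset.range n, (y ^ 2 + y) ^ 2 ^ j + n := by
  rw [sum_range_two_mul_pow_two_pow, ← sum_add_one_pow_two_pow]
  have : y ^ 3 + (y ^ 3) ^ 2 ^ n = y ^ 2 + y + 1 := by
    rw [← pow_mul, mul_comm 3, pow_mul, hy]
    linear_combination (y ^ 3 + y ^ 2 + y) * CharTwo.two_eq_zero (R := R)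
  rw [this]

/-- If an even power of Frobenius translates `y` by `1`, then any power of Frobenius
fixing `y ^ 3` already fixes `y`. -/
theorem pow_two_pow_eq_self_of_cube {F : Type*} [Field F] [CharP F 2] {y : F} {n m : ℕ}
    (hn : Even n) (hy : y ^ 2 ^ n = y + 1) (h3 : (y ^ 3) ^ 2 ^ m = y ^ 3) : y ^ 2 ^ m = y := by
  have hy0 : y ≠ 0 := by
    rintro rfl
    simp at hy
  obtain ⟨w, hw⟩ : ∃ w, y ^ 2 ^ m = w * y := ⟨y ^ 2 ^ m / y, by field_simp⟩
  have hw3 : w ^ 3 = 1 := by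
    rw [← pow_mul, mul_comm 3, pow_mul, hw, mul_pow] at h3
    exact mul_right_cancel₀ (pow_ne_zero 3 hy0) (h3.trans (one_mul _).symm)
  have h1 : (y ^ 2 ^ m) ^ 2 ^ n = w * (y + 1) := by
    rw [hw, mul_pow, hy, pow_two_pow_even_eq_self_of_cube_eq_one hw3 hn]
  have h2 : (y ^ 2 ^ m) ^ 2 ^ n = w * y + 1 := by
    rw [← pow_mul, mul_comm, pow_mul, hy, add_pow_char_pow, hw, one_pow]
  have hw1 : w = 1 := by linear_combination h2 - h1
  rw [hw, hw1, one_mul]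

end CharTwo

/-- Let `Ω` be an algebraic closure of `F_2` and let `d ≥ 1` be odd. Fix
`x_0 ∈ Ω` with `U_0 = F_2(x_0)` of degree `d` over `F_2` and `Tr_{U_0/F_2}(x_0) ≠ 0`. Let
`x_1, x_2, … ∈ Ω` satisfy `x_1² + x_1 = x_0`, `x_2² + x_2 = x_1`, and
`x_i² + x_i = x_{i−1}³` for all `i ≥ 3`. Then for every `i ≥ 0` the element `x_i` generates
`F_2(x_0, …, x_i)` over `F_2`, and `[F_2(x_i) : F_2] = 2^i · d`. -/
theorem cantor_tower_char_two_odd_degree_is_primitive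
    (d : ℕ) (hd1 : 1 ≤ d) (hdodd : Odd d)
    (Ω : Type*) [Field Ω] [Algebra (ZMod 2) Ω] [IsAlgClosure (ZMod 2) Ω]
    (x : ℕ → Ω)
    (U : ℕ → IntermediateField (ZMod 2) Ω)
    (hU : ∀ i, U i = IntermediateField.adjoin (ZMod 2) (x '' Set.Iic i))
    (hdeg : Module.finrank (ZMod 2) ↥(U 0) = d)
    (hx0 : x 0 ∈ U 0)
    (htr0 : Algebra.trace (ZMod 2) ↥(U 0) ⟨x 0, hx0⟩ ≠ 0)
    (hx1 : x 1 ^ 2 + x 1 = x 0)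
    (hx2 : x 2 ^ 2 + x 2 = x 1)
    (hxi : ∀ i, 2 ≤ i → x (i + 1) ^ 2 + x (i + 1) = x i ^ 3) :
    ∀ i, (ZMod 2)⟮x i⟯ = U i ∧
      Module.finrank (ZMod 2) ↥((ZMod 2)⟮x i⟯) = 2 ^ i * d := by
  have : CharP Ω 2 := charP_of_injective_algebraMap (algebraMap (ZMod 2) Ω).injective 2
  have : Algebra.IsAlgebraic (ZMod 2) Ω := IsAlgClosure.isAlgebraic
  have hint (y : Ω) : IsIntegral (ZMod 2) y := Algebra.IsIntegral.isIntegral y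
  have fixed_iff (y : Ω) (m : ℕ) :
      y ^ 2 ^ m = y ↔ Module.finrank (ZMod 2) (ZMod 2)⟮y⟯ ∣ m := by
    simpa using pow_card_pow_eq_self_iff_finrank_adjoin_dvd (hint y) m
  have hU0 : (ZMod 2)⟮x 0⟯ = U 0 := by
    rw [hU, show Set.Iic 0 = {0} by ext; simp, Set.image_singleton]
  have hdeg0 : Module.finrank (ZMod 2) (ZMod 2)⟮x 0⟯ = d := by rw [hU0, hdeg]
  have tr0 : ∑ j ∈ Finset.range d, x 0 ^ 2 ^ j = 1 := by
    have : FiniteDimensional (ZMod 2) (U 0) := hU0 ▸ adjoin.finiteDimensional (hint _)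
    have : Finite (U 0) := Module.finite_of_finite (ZMod 2)
    have h := FiniteField.algebraMap_trace_eq_sum_pow (ZMod 2) (U 0) ⟨x 0, hx0⟩
    rw [show Algebra.trace (ZMod 2) (U 0) ⟨x 0, hx0⟩ = 1 from Fin.eq_one_of_ne_zero _ htr0,
      map_one, hdeg] at h
    simpa using (congrArg Subtype.val h).symm
  have hdcast : (d : Ω) = 1 := by
    obtain ⟨k, rfl⟩ := hdodd
    simp [CharTwo.two_eq_zero]
  have shift1 : x 1 ^ 2 ^ d = x 1 + 1 := pow_two_pow_eq_add_one hx1 tr0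
  have tr1 : ∑ j ∈ Finset.range (2 * d), x 1 ^ 2 ^ j = 1 := by
    rw [sum_range_two_mul_pow_two_pow, shift1, ← add_assoc, CharTwo.add_self_eq_zero]
    simp [hdcast]
  have shift2 : x 2 ^ 2 ^ (2 * d) = x 2 + 1 := pow_two_pow_eq_add_one hx2 tr1
  have cast_two_mul (n : ℕ) : ((2 * n : ℕ) : Ω) = 0 := by simp [CharTwo.two_eq_zero]
  have shift_add_two (k : ℕ) :
      x (k + 2) ^ 2 ^ (2 ^ (k + 1) * d) = x (k + 2) + 1 ∧
        ∑ j ∈ Finset.range (2 ^ (k + 2) * d), (x (k + 2) ^ 3) ^ 2 ^ j = 1 := by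
    induction k with
    | zero =>
      refine ⟨by simpa using shift2, ?_⟩
      rw [show 2 ^ (0 + 2) * d = 2 * (2 * d) by ring, sum_range_two_mul_cube_pow_two_pow shift2,
        hx2, tr1, cast_two_mul, add_zero]
    | succ k ih =>
      have hx := hxi (k + 2) (by omega)
      have shift := pow_two_pow_eq_add_one hx ih.2
      refine ⟨shift, ?_⟩
      rw [show 2 ^ (k + 1 + 2) * d = 2 * (2 ^ (k + 2) * d) by ring,
        show k + 1 + 2 = k + 2 + 1 by ring, sum_range_two_mul_cube_pow_two_pow shift, hx, ih.2,
        show 2 ^ (k + 2) * d = 2 * (2 ^ (k + 1) * d) by ring, cast_two_mul, add_zero]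
  have shift (i : ℕ) : x (i + 1) ^ 2 ^ (2 ^ i * d) = x (i + 1) + 1 := by
    cases i with
    | zero => simpa using shift1
    | succ k => exact (shift_add_two k).1
  have fixed_of_succ (i m : ℕ) (h : x (i + 1) ^ 2 ^ m = x (i + 1)) : x i ^ 2 ^ m = x i := by
    have hrhs : (x (i + 1) ^ 2 + x (i + 1)) ^ 2 ^ m = x (i + 1) ^ 2 + x (i + 1) := by
      rw [add_pow_char_pow, ← pow_mul, mul_comm 2, pow_mul, h]
    match i with
    | 0 => simpa only [zero_add, hx1] using hrhs
    | 1 => simpa only [one_add_one_eq_two, hx2] using hrhs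
    | k + 2 =>
      rw [hxi (k + 2) (by omega)] at hrhs
      exact pow_two_pow_eq_self_of_cube ((even_two.pow_of_ne_zero k.succ_ne_zero).mul_right d)
        (shift (k + 1)) hrhs
  have degree (i : ℕ) : Module.finrank (ZMod 2) (ZMod 2)⟮x i⟯ = 2 ^ i * d := by
    induction i with
    | zero => simpa using hdeg0
    | succ i ih =>
      have hdvd : 2 ^ i * d ∣ Module.finrank (ZMod 2) (ZMod 2)⟮x (i + 1)⟯ :=
        ih ▸ (fixed_iff _ _).mp (fixed_of_succ i _ ((fixed_iff _ _).mpr dvd_rfl))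
      obtain ⟨c, hc⟩ := hdvd
      have hdvd2 := (fixed_iff _ _).mp (pow_two_pow_two_mul_eq_self (shift i))
      have hnot : ¬ Module.finrank (ZMod 2) (ZMod 2)⟮x (i + 1)⟯ ∣ 2 ^ i * d := by
        rw [← fixed_iff, shift i]
        simp
      rw [hc, mul_comm 2] at hdvd2
      have hc2 : c ∣ 2 := Nat.dvd_of_mul_dvd_mul_left (by positivity) hdvd2
      rcases (Nat.dvd_prime Nat.prime_two).mp hc2 with rfl | rfl
      · simp [hc] at hnot
      · rw [hc]
        ring
  have mem_succ (i : ℕ) : x i ∈ (ZMod 2)⟮x (i + 1)⟯ := by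
    have : FiniteDimensional (ZMod 2) (ZMod 2)⟮x (i + 1)⟯ := adjoin.finiteDimensional (hint _)
    refine mem_of_pow_card_pow_finrank_eq_self _ ?_
    rw [ZMod.card]
    exact fixed_of_succ i _ ((fixed_iff _ _).mpr dvd_rfl)
  have mono : Monotone fun i ↦ (ZMod 2)⟮x i⟯ :=
    monotone_nat_of_le_succ fun i ↦ adjoin_simple_le_iff.mpr (mem_succ i)
  refine fun i ↦ ⟨le_antisymm ?_ ?_, degree i⟩
  · rw [hU, adjoin_simple_le_iff]
    exact subset_adjoin _ _ ⟨i, Set.self_mem_Iic, rfl⟩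
  · rw [hU, adjoin_le_iff]
    rintro _ ⟨j, hj, rfl⟩
    exact mono hj (mem_adjoin_simple_self _ _)
end

section
/- In the Cantor tower over F_p with p odd, for every i ≥ 0 one has Tr_{U_i/F_p}(γ_i) = (−1)^i · Tr_{U_0/F_p}(x_0); in particular Tr_{U_i/F_p}(γ_i) ≠ 0 for all i. -/
open IntermediateField

section ArtinSchreier

open Finset

variable {p : ℕ} [Fact p.Prime]

theorem ZMod.sum_pow_card_sub_one : ∑ a : ZMod p, a ^ (p - 1) = -1 := by
  have hp : p - 1 ≠ 0 := Nat.sub_ne_zero_of_lt (Fact.out : p.Prime).one_lt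
  have h (a : ZMod p) : a ^ (p - 1) = 1 - if a = 0 then 1 else 0 := by
    split_ifs with ha
    · simp [ha, hp]
    · simp [ZMod.pow_card_sub_one_eq_one ha]
  simp [h]

variable {E : Type*} [Field E] [Algebra (ZMod p) E]

theorem sum_add_algebraMap_pow_card_sub_one (y : E) :
    ∑ a : ZMod p, (y + algebraMap (ZMod p) E a) ^ (p - 1) = -1 := by
  have hp : p - 1 ≠ 0 := Nat.sub_ne_zero_of_lt (Fact.out : p.Prime).one_lt
  have h (k : ℕ) (hk : k ∈ range (p - 1 + 1)) :
      ∑ a : ZMod p, y ^ k * algebraMap (ZMod p) E a ^ (p - 1 - k) * ((p - 1).choose k : E) =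
        if k = 0 then -1 else 0 := by
    rw [← sum_mul, ← mul_sum]
    simp_rw [← map_pow, ← map_sum]
    split_ifs with h0
    · simp [h0, ZMod.sum_pow_card_sub_one]
    · rw [FiniteField.sum_pow_lt_card_sub_one]
      · simp
      · rw [ZMod.card]
        omega
  simp_rw [add_pow]
  rw [sum_comm, sum_congr rfl h]
  simp

theorem sum_add_algebraMap_pow_two_mul_sub_one (hodd : p ≠ 2) (y : E) :
    ∑ a : ZMod p, (y + algebraMap (ZMod p) E a) ^ (2 * p - 1) = -(y ^ p - y) := by
  have : CharP E p := charP_of_injective_algebraMap (algebraMap (ZMod p) E).injective p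
  have hp := (Fact.out : p.Prime).two_le
  have h (a : ZMod p) : (y + algebraMap (ZMod p) E a) ^ (2 * p - 1) =
      y + algebraMap (ZMod p) E a + (y ^ p - y) +
        (y ^ p - y) * (y + algebraMap (ZMod p) E a) ^ (p - 1) := by
    have h₁ : (y + algebraMap (ZMod p) E a) ^ p =
        (y + algebraMap (ZMod p) E a) + (y ^ p - y) := by
      rw [add_pow_char, ← map_pow, ZMod.pow_card]
      ring
    have h₂ : (y + algebraMap (ZMod p) E a) * (y + algebraMap (ZMod p) E a) ^ (p - 1) =
        (y + algebraMap (ZMod p) E a) ^ p := by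
      rw [← pow_succ']
      congr 1
      omega
    rw [show 2 * p - 1 = p + (p - 1) by omega, pow_add, h₁, add_mul, h₂, h₁]
  have hsum : ∑ a : ZMod p, a = 0 := by
    simpa using FiniteField.sum_pow_lt_card_sub_one (ZMod p) 1 (by rw [ZMod.card]; omega)
  simp_rw [h]
  rw [sum_add_distrib, ← mul_sum, sum_add_algebraMap_pow_card_sub_one, sum_add_distrib,
    sum_add_distrib, ← map_sum, hsum]
  simp [ZMod.card]

theorem pow_char_pow_eq_add_sum {y g : E} (hy : y ^ p - y = g) (n : ℕ) :
    y ^ p ^ n = y + ∑ j ∈ range n, g ^ p ^ j := by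
  have : CharP E p := charP_of_injective_algebraMap (algebraMap (ZMod p) E).injective p
  induction n with
  | zero => simp
  | succ n ih =>
    rw [sum_range_succ, ← add_assoc, ← ih, ← hy, sub_pow_char_pow, ← pow_mul, ← pow_succ']
    ring

theorem pow_char_pow_mul_eq_add {y : E} {n : ℕ} {c : ZMod p}
    (hy : y ^ p ^ n = y + algebraMap (ZMod p) E c) (k : ℕ) :
    y ^ p ^ (n * k) = y + algebraMap (ZMod p) E (k * c) := by
  have : CharP E p := charP_of_injective_algebraMap (algebraMap (ZMod p) E).injective p
  induction k with
  | zero => simp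
  | succ k ih =>
    rw [mul_add_one, pow_add, pow_mul, ih, add_pow_char_pow, hy, ← map_pow, ZMod.pow_card_pow]
    push_cast
    ring

theorem sum_range_mul_pow_pow (z : E) (n m : ℕ) :
    ∑ j ∈ range (n * m), z ^ p ^ j = ∑ j ∈ range n, (∑ k ∈ range m, z ^ p ^ (n * k)) ^ p ^ j := by
  have : CharP E p := charP_of_injective_algebraMap (algebraMap (ZMod p) E).injective p
  simp_rw [sum_pow_char_pow, ← pow_mul, ← pow_add]
  rw [sum_comm]
  induction m with
  | zero => simp
  | succ m ih => rw [mul_add_one, sum_range_add, sum_range_succ, ih]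

theorem ZMod.sum_range_mul_eq_sum {M : Type*} [AddCommMonoid M] {c : ZMod p} (hc : c ≠ 0)
    (f : ZMod p → M) : ∑ k ∈ range p, f (k * c) = ∑ a, f a := by
  rw [← Equiv.sum_comp (Equiv.mulRight₀ c hc) f]
  refine sum_bij (fun k _ => (k : ZMod p)) (by simp) ?_ ?_ (by simp)
  · intro a ha b hb hab
    rw [mem_range] at ha hb
    rwa [ZMod.natCast_eq_natCast_iff', Nat.mod_eq_of_lt ha, Nat.mod_eq_of_lt hb] at hab
  · intro b _
    exact ⟨b.val, mem_range.2 b.val_lt, by simp⟩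

theorem IntermediateField.algebraMap_trace_eq_sum_pow (K : IntermediateField (ZMod p) E)
    [FiniteDimensional (ZMod p) K] (z : K) :
    algebraMap (ZMod p) E (Algebra.trace (ZMod p) K z) =
      ∑ j ∈ range (Module.finrank (ZMod p) K), (z : E) ^ p ^ j := by
  have : Finite K := Module.finite_of_finite (ZMod p)
  have h := congrArg (algebraMap K E) (FiniteField.algebraMap_trace_eq_sum_pow (ZMod p) K z)
  rw [← IsScalarTower.algebraMap_apply] at h
  simpa using h

theorem IntermediateField.pow_pow_finrank (K : IntermediateField (ZMod p) E)
    [FiniteDimensional (ZMod p) K] {z : E} (hz : z ∈ K) :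
    z ^ p ^ Module.finrank (ZMod p) K = z := by
  have : Finite K := Module.finite_of_finite (ZMod p)
  have := Fintype.ofFinite K
  have h := FiniteField.pow_card (⟨z, hz⟩ : K)
  rw [Module.card_eq_pow_finrank (K := ZMod p), ZMod.card] at h
  simpa using congrArg Subtype.val h

/-- Adjoining a root `y` of `X ^ p - X - g` to a finite field `K`, where `g ∈ K` has nonzero
absolute trace, gives an extension of degree `p`. -/
theorem IntermediateField.finrank_adjoin_artinSchreier {K : IntermediateField (ZMod p) E}
    [FiniteDimensional (ZMod p) K] {y : E} {g : K} (hy : y ^ p - y = g)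
    (hg : Algebra.trace (ZMod p) K g ≠ 0) :
    FiniteDimensional (ZMod p) (K⟮y⟯.restrictScalars (ZMod p)) ∧
      Module.finrank (ZMod p) (K⟮y⟯.restrictScalars (ZMod p)) =
        Module.finrank (ZMod p) K * p := by
  have hp := (Fact.out : p.Prime)
  have hdeg : (Polynomial.X + Polynomial.C g).degree < (p : WithBot ℕ) := by
    rw [Polynomial.degree_X_add_C]
    exact_mod_cast hp.one_lt
  have hmonic : (Polynomial.X ^ p - (Polynomial.X + Polynomial.C g)).Monic :=
    Polynomial.monic_X_pow_sub hdeg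
  have hroot : Polynomial.aeval y (Polynomial.X ^ p - (Polynomial.X + Polynomial.C g)) = 0 := by
    simp [← hy]
  have hint : IsIntegral K y := ⟨_, hmonic, hroot⟩
  have : FiniteDimensional K K⟮y⟯ := adjoin.finiteDimensional hint
  have : FiniteDimensional (ZMod p) K⟮y⟯ := FiniteDimensional.trans (ZMod p) K K⟮y⟯
  have hfin : FiniteDimensional (ZMod p) (K⟮y⟯.restrictScalars (ZMod p)) := this
  refine ⟨hfin, ?_⟩
  have : Module.Free K K⟮y⟯ := Module.Free.of_divisionRing K K⟮y⟯
  have hmul : Module.finrank (ZMod p) (K⟮y⟯.restrictScalars (ZMod p)) =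
      Module.finrank (ZMod p) K * Module.finrank K K⟮y⟯ :=
    (Module.finrank_mul_finrank (ZMod p) K K⟮y⟯).symm
  have hle : Module.finrank K K⟮y⟯ ≤ p := by
    rw [adjoin.finrank hint]
    refine (Polynomial.natDegree_le_of_dvd (minpoly.dvd K y hroot) hmonic.ne_zero).trans ?_
    rw [Polynomial.natDegree_sub_eq_left_of_natDegree_lt] <;> simp [hp.one_lt]
  have hpos : 0 < Module.finrank K K⟮y⟯ := Module.finrank_pos
  have hfix := IntermediateField.pow_pow_finrank (K⟮y⟯.restrictScalars (ZMod p))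
    (mem_adjoin_simple_self K y)
  have hstep := pow_char_pow_eq_add_sum hy (Module.finrank (ZMod p) K)
  rw [← IntermediateField.algebraMap_trace_eq_sum_pow] at hstep
  rw [hmul, pow_char_pow_mul_eq_add hstep, add_eq_left, map_eq_zero, mul_eq_zero,
    or_iff_left hg, ZMod.natCast_eq_zero_iff] at hfix
  rw [hmul, hle.antisymm (Nat.le_of_dvd hpos hfix)]

theorem IntermediateField.trace_artinSchreier_pow_two_mul_sub_one (hodd : p ≠ 2)
    {K L : IntermediateField (ZMod p) E} [FiniteDimensional (ZMod p) K] {y : E} {g : K}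
    (hy : y ^ p - y = g) (hg : Algebra.trace (ZMod p) K g ≠ 0)
    (hL : L = K⟮y⟯.restrictScalars (ZMod p)) (hyL : y ^ (2 * p - 1) ∈ L) :
    Algebra.trace (ZMod p) L ⟨y ^ (2 * p - 1), hyL⟩ = -Algebra.trace (ZMod p) K g := by
  subst hL
  obtain ⟨hfin, hrank⟩ := IntermediateField.finrank_adjoin_artinSchreier hy hg
  have hstep := pow_char_pow_eq_add_sum hy (Module.finrank (ZMod p) K)
  rw [← IntermediateField.algebraMap_trace_eq_sum_pow] at hstep
  apply (algebraMap (ZMod p) E).injective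
  rw [← map_neg, IntermediateField.algebraMap_trace_eq_sum_pow,
    IntermediateField.algebraMap_trace_eq_sum_pow, hrank, sum_range_mul_pow_pow]
  refine sum_congr rfl fun j _ => congrArg (· ^ p ^ j) ?_
  simp_rw [pow_right_comm y (2 * p - 1), pow_char_pow_mul_eq_add hstep]
  rw [ZMod.sum_range_mul_eq_sum hg
    fun a => (y + algebraMap (ZMod p) E a) ^ (2 * p - 1),
    sum_add_algebraMap_pow_two_mul_sub_one hodd, hy]
  simp

end ArtinSchreier

/-- In the Cantor tower over `F_p` with `p` odd, for every `i ≥ 0` one has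
`Tr_{U_i/F_p}(γ_i) = (−1)^i · Tr_{U_0/F_p}(x_0)`; in particular `Tr_{U_i/F_p}(γ_i) ≠ 0`. -/
theorem cantor_tower_trace_gamma
    (p d : ℕ) [Fact p.Prime] (hodd : p ≠ 2) (hd : 1 ≤ d)
    (Ω : Type*) [Field Ω] [Algebra (ZMod p) Ω] [IsAlgClosure (ZMod p) Ω]
    (x : ℕ → Ω)
    (U : ℕ → IntermediateField (ZMod p) Ω)
    (hU : ∀ i, U i = IntermediateField.adjoin (ZMod p) (x '' Set.Iic i))
    (hdeg : Module.finrank (ZMod p) ↥(U 0) = d)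
    (hx0 : x 0 ∈ U 0)
    (htr0 : Algebra.trace (ZMod p) ↥(U 0) ⟨x 0, hx0⟩ ≠ 0)
    (hx1 : x 1 ^ p - x 1 = x 0)
    (hxi : ∀ i, 1 ≤ i → x (i + 1) ^ p - x (i + 1) = x i ^ (2 * p - 1))
    (γ : ℕ → Ω) (hγ0 : γ 0 = x 0) (hγ : ∀ i, 1 ≤ i → γ i = x i ^ (2 * p - 1)) :
    ∀ i, ∃ hγi : γ i ∈ U i,
      Algebra.trace (ZMod p) ↥(U i) ⟨γ i, hγi⟩ =
          (-1 : ZMod p) ^ i * Algebra.trace (ZMod p) ↥(U 0) ⟨x 0, hx0⟩ ∧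
        Algebra.trace (ZMod p) ↥(U i) ⟨γ i, hγi⟩ ≠ 0 := by
  have hrec (i : ℕ) : x (i + 1) ^ p - x (i + 1) = γ i := by
    rcases Nat.eq_zero_or_pos i with rfl | hi
    · rw [hγ0, hx1]
    · rw [hγ i hi, hxi i hi]
  have hmem (i : ℕ) : x i ∈ U i := by
    rw [hU]
    exact subset_adjoin _ _ ⟨i, Set.mem_Iic.2 le_rfl, rfl⟩
  have hsucc (i : ℕ) : U (i + 1) = (U i)⟮x (i + 1)⟯.restrictScalars (ZMod p) := by
    rw [hU i, adjoin_adjoin_left, hU, ← Order.succ_eq_add_one, Order.Iic_succ, Set.image_insert_eq,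
      Set.union_singleton]
  have hfin (i : ℕ) (h : ∃ z : U i, Algebra.trace (ZMod p) (U i) z ≠ 0) :
      FiniteDimensional (ZMod p) (U i) := by
    by_contra hinf
    obtain ⟨z, hz⟩ := h
    refine hz ?_
    rw [Algebra.trace_eq_zero_of_not_exists_basis]
    · rfl
    · rintro ⟨s, ⟨b⟩⟩
      exact hinf (Module.Finite.of_basis b)
  suffices h : ∀ i, ∃ hγi : γ i ∈ U i, Algebra.trace (ZMod p) (U i) ⟨γ i, hγi⟩ =
      (-1 : ZMod p) ^ i * Algebra.trace (ZMod p) (U 0) ⟨x 0, hx0⟩ by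
    intro i
    obtain ⟨hγi, htr⟩ := h i
    exact ⟨hγi, htr, htr ▸ mul_ne_zero (pow_ne_zero _ (neg_ne_zero.2 one_ne_zero)) htr0⟩
  intro i
  induction i with
  | zero => exact ⟨hγ0 ▸ hx0, by simp [hγ0]⟩
  | succ i ih =>
    obtain ⟨hγi, htr⟩ := ih
    have hne : Algebra.trace (ZMod p) (U i) ⟨γ i, hγi⟩ ≠ 0 :=
      htr ▸ mul_ne_zero (pow_ne_zero _ (neg_ne_zero.2 one_ne_zero)) htr0
    have := hfin i ⟨_, hne⟩
    have hmem' := pow_mem (hmem (i + 1)) (2 * p - 1)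
    have key := trace_artinSchreier_pow_two_mul_sub_one hodd (hrec i) hne (hsucc i) hmem'
    simp_rw [hγ (i + 1) (Nat.succ_pos i)]
    exact ⟨hmem', by rw [key, htr]; ring⟩
end
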